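/- Let λ, μ ∈ P[n] and let T be a semi-standard set-valued tableau of shape μ with entries ≤ n, with rows T_1,…,T_n from the top. For 1≤i≤n and 0≤k≤i, let N_{i,k} := λ_i + (number of occurrences of i in the rows T_1,…,T_k) (so N_{i,0}=λ_i). Then T is λ-dominant if and only if N_{i,k} ≥ N_{i+1,k+1} for all 1 ≤ i < n and 0 ≤ k ≤ i. -/

import Mathlib

/-!
The word of a single row of `T` (read right to left, cells decreasingly) is weakly
decreasing (`rowWord_sorted`), so in each row every `i + 1` is read before any `i`. Hence, while
row `k + 1` is being read, the number of `i + 1`'s minus the number of `i`'s is largest just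
after the last `i + 1` of that row, where it equals `N_{i+1,k+1} - N_{i,k}`. Necessity is
the dominance condition at exactly that prefix. For sufficiency, a prefix ending in row `k + 1`
has at most `N_{i+1,k+1}` letters `i + 1` and at least `N_{i,k}` letters `i`. The pairs with
`k > i` or `i ≥ n` are covered by `Ndom_le_all`, since entries of row `r` are at least `r`
(`row_le_entry`) and at most `n`. Prefixes inside the word of `T_lam` are dominant because `lam` is
a partition (`superWord_dominant`).
-/

/-!
Common combinatorial definitions: partitions, (skew) set-valued tableaux,
contratableaux, reading words, dominance, Gelfand-Tsetlin patterns, and the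
maps Υ and Ω.  Partitions are encoded as functions `ℕ → ℕ` whose parts are
`lam 1, lam 2, …` (with `lam 0 = 0` as a normalization).  Tableaux are encoded
as functions `ℕ → ℕ → Finset ℕ` assigning to each box (row, column), both
indexed from `1`, its (finite) set of entries, with value `∅` outside the
shape. -/

/-- `lam` is a partition with at most `n` nonzero parts `lam 1 ≥ lam 2 ≥ ⋯`. -/
def IsPartition (n : ℕ) (lam : ℕ → ℕ) : Prop :=
  lam 0 = 0 ∧ (∀ i, 1 ≤ i → lam (i + 1) ≤ lam i) ∧ (∀ i, n < i → lam i = 0)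

/-- `|lam|`, the sum of the parts of a partition in `P[n]`. -/
def sumParts (n : ℕ) (lam : ℕ → ℕ) : ℕ := ∑ i ∈ Finset.Icc 1 n, lam i

/-- The boxes of the skew Young diagram `lam/mu` (rows indexed from the top,
starting at `1`; columns from the left, starting at `1`). -/
def SkewBox (lam mu : ℕ → ℕ) (i j : ℕ) : Prop :=
  1 ≤ i ∧ mu i < j ∧ j ≤ lam i

/-- The boxes of the straight Young diagram of `mu`. -/
def ShapeBox (mu : ℕ → ℕ) (i j : ℕ) : Prop :=
  1 ≤ i ∧ 1 ≤ j ∧ j ≤ mu i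

/-- A semi-standard set-valued tableau with entries in `[n] = {1, …, n}` on a
given set `box` of boxes (rows indexed from the top): every box carries a
nonempty subset of `[n]`, rows weakly increase from left to right, columns
strictly increase from top to bottom, and the filling vanishes off the shape. -/
def IsSSVT (n : ℕ) (box : ℕ → ℕ → Prop) (T : ℕ → ℕ → Finset ℕ) : Prop :=
  (∀ i j, box i j → (T i j).Nonempty) ∧
  (∀ i j, box i j → T i j ⊆ Finset.Icc 1 n) ∧
  (∀ i j, ¬ box i j → T i j = ∅) ∧
  (∀ i j, box i j → box i (j + 1) → ∀ a ∈ T i j, ∀ b ∈ T i (j + 1), a ≤ b) ∧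
  (∀ i j, box i j → box (i + 1) j → ∀ a ∈ T i j, ∀ b ∈ T (i + 1) j, a < b)

/-- The boxes of the rotated shape `C(lam)` (for `lam ∈ P[n]`): the `j`-th row
from the *bottom* (`1 ≤ j ≤ n`) consists of `lam j` right-justified boxes, in
columns `lam 1 - lam j + 1, …, lam 1`. -/
def ContraBox (n : ℕ) (lam : ℕ → ℕ) (j c : ℕ) : Prop :=
  1 ≤ j ∧ j ≤ n ∧ lam 1 - lam j < c ∧ c ≤ lam 1

/-- A set-valued contratableau of shape `lam` with entries in `[n]`: a
semi-standard set-valued tableau of shape `C(lam)`.  Here `T j c` is the box in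
the `j`-th row from the bottom and column `c`; "columns strictly increase from
top to bottom" says entries of row `j+1` (which lies above row `j`) are
strictly smaller than those below them in row `j`. -/
def IsSVCT (n : ℕ) (lam : ℕ → ℕ) (T : ℕ → ℕ → Finset ℕ) : Prop :=
  (∀ j c, ContraBox n lam j c → (T j c).Nonempty) ∧
  (∀ j c, ContraBox n lam j c → T j c ⊆ Finset.Icc 1 n) ∧
  (∀ j c, ¬ ContraBox n lam j c → T j c = ∅) ∧
  (∀ j c, ContraBox n lam j c → ContraBox n lam j (c + 1) →
    ∀ a ∈ T j c, ∀ b ∈ T j (c + 1), a ≤ b) ∧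
  (∀ j c, ContraBox n lam j c → ContraBox n lam (j + 1) c →
    ∀ a ∈ T (j + 1) c, ∀ b ∈ T j c, a < b)

/-- The entries of one cell, read in decreasing order. -/
def cellWord (S : Finset ℕ) : List ℕ := (S.sort (· ≤ ·)).reverse

/-- The row word: rows are read from top to bottom, each row from right to
left, the entries of each cell in decreasing order (reading over the rectangle
with `R` rows and `W` columns, which covers the shape; cells off the shape are
empty and contribute nothing). -/
def rowWordRect (R W : ℕ) (T : ℕ → ℕ → Finset ℕ) : List ℕ :=
  ((List.range R).map (fun i =>
    (((List.range W).reverse).map (fun j => cellWord (T (i + 1) (j + 1)))).flatten)).flatten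

/-- The column word: columns are read from rightmost to leftmost, each column
from top to bottom, the entries of each cell in decreasing order. -/
def colWordRect (R W : ℕ) (T : ℕ → ℕ → Finset ℕ) : List ℕ :=
  (((List.range W).reverse).map (fun j =>
    ((List.range R).map (fun i => cellWord (T (i + 1) (j + 1)))).flatten)).flatten

/-- The row word of a contratableau whose rows are indexed from the bottom
(`1, …, n`): rows are read from top to bottom (i.e. row `n` first), each row
from right to left, cell entries in decreasing order. -/
def contraRowWord (n W : ℕ) (T : ℕ → ℕ → Finset ℕ) : List ℕ :=
  (((List.range n).reverse).map (fun j =>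
    (((List.range W).reverse).map (fun c => cellWord (T (j + 1) (c + 1)))).flatten)).flatten

/-- A word is dominant if every prefix contains at least as many `i`'s as
`(i+1)`'s, for every `i ≥ 1`. -/
def Dominant (u : List ℕ) : Prop :=
  ∀ t i, 1 ≤ i → (u.take t).count (i + 1) ≤ (u.take t).count i

/-- The row word of the superstandard tableau `T_lam` of shape and weight
`lam` (its `i`-th row consists of `lam i` many `i`'s), for `lam ∈ P[n]`. -/
def superWord (n : ℕ) (lam : ℕ → ℕ) : List ℕ :=
  ((List.range n).map (fun i => List.replicate (lam (i + 1)) (i + 1))).flatten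

/-- A word `u` is `lam`-dominant if `r(T_lam) * u` is dominant. -/
def LamDominant (n : ℕ) (lam : ℕ → ℕ) (u : List ℕ) : Prop :=
  Dominant (superWord n lam ++ u)

/-- The number of occurrences of the entry `v` in row `r` of `T`
(columns `1, …, W`). -/
def rowOcc (W : ℕ) (T : ℕ → ℕ → Finset ℕ) (r v : ℕ) : ℕ :=
  ∑ c ∈ Finset.Icc 1 W, if v ∈ T r c then 1 else 0

/-- The number of occurrences of the entry `v` in `T` (the `v`-th coordinate
of the weight `wt T`), rows `1, …, R` and columns `1, …, W`. -/
def wtT (R W : ℕ) (T : ℕ → ℕ → Finset ℕ) (v : ℕ) : ℕ :=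
  ∑ r ∈ Finset.Icc 1 R, rowOcc W T r v

/-- The total number of entries `|T|` of a set-valued tableau. -/
def sizeT (R W : ℕ) (T : ℕ → ℕ → Finset ℕ) : ℕ :=
  ∑ r ∈ Finset.Icc 1 R, ∑ c ∈ Finset.Icc 1 W, (T r c).card

/-- A Gelfand-Tsetlin pattern of size `n`: a triangular array of integers
`x i j` (`1 ≤ j ≤ i ≤ n`) with `NE_{i,j} = x i j - x (i-1) j ≥ 0` and
`SE_{i,j} = x (i-1) j - x i (j+1) ≥ 0` for all `1 ≤ j < i ≤ n`, normalized to
vanish outside the triangle. -/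
def IsGT (n : ℕ) (x : ℕ → ℕ → ℤ) : Prop :=
  (∀ i j, 1 ≤ j → j < i → i ≤ n → x (i - 1) j ≤ x i j ∧ x i (j + 1) ≤ x (i - 1) j) ∧
  (∀ i j, ¬ (1 ≤ j ∧ j ≤ i ∧ i ≤ n) → x i j = 0)

/-- A GT pattern in `GT_ℤ(lam)`: bottom row equal to `lam`. -/
def IsGTZ (n : ℕ) (lam : ℕ → ℕ) (x : ℕ → ℕ → ℤ) : Prop :=
  IsGT n x ∧ ∀ j, 1 ≤ j → j ≤ n → x n j = (lam j : ℤ)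

/-- A valid set of marks on a GT pattern: `M ⊆ {(i,j) : 1 ≤ j < i ≤ n` and
`SE_{i,j}(x) > 0}`. -/
def MarksOK (n : ℕ) (x : ℕ → ℕ → ℤ) (M : Finset (ℕ × ℕ)) : Prop :=
  ∀ p ∈ M, 1 ≤ p.2 ∧ p.2 < p.1 ∧ p.1 ≤ n ∧ 0 < x (p.1 - 1) p.2 - x p.1 (p.2 + 1)

/-- A marked GT pattern in `MGT_ℤ(lam)`. -/
def IsMGTZ (n : ℕ) (lam : ℕ → ℕ) (x : ℕ → ℕ → ℤ) (M : Finset (ℕ × ℕ)) : Prop :=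
  IsGTZ n lam x ∧ MarksOK n x M

/-- The map `Υ` from marked GT patterns to set-valued tableaux, in closed form:
the entry `i` lies in the box in row `r`, column `c` iff `x_{i-1,r} < c ≤ x_{i,r}`
(the horizontal strip `x^{(i)}/x^{(i-1)}` is filled with `i`'s), or `(i,r) ∈ M`
and `c = x_{i-1,r}` (for a mark, `i` is added to the rightmost box of row `r`
of `X^{(i-1)}`, the box containing `i-1` there). -/
def Upsilon (n : ℕ) (x : ℕ → ℕ → ℤ) (M : Finset (ℕ × ℕ)) : ℕ → ℕ → Finset ℕ :=
  fun r c => (Finset.Icc 1 n).filter (fun i =>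
    (x (i - 1) r < (c : ℤ) ∧ (c : ℤ) ≤ x i r) ∨ ((i, r) ∈ M ∧ (c : ℤ) = x (i - 1) r))

/-- The map `Ω` from marked GT patterns to set-valued contratableaux of shape
`lam`, in closed form.  Rows are indexed from the bottom and the box in row `j`
and column `c` is the `d`-th box from the right where `d = lam 1 + 1 - c`.
The entry `v = n + 1 - i` lies there iff `y_{i-1,j} < d ≤ y_{i,j}` (the boxes
of `C(y^{(i)})/C(y^{(i-1)})` are filled with `n+1-i`), or `(i,j) ∈ M` and
`d = y_{i-1,j}` (for a mark, `n+1-i` is added to the leftmost box of row `j`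
of `Y^{(i-1)}`, the box containing `n+2-i` there). -/
def Omega (n : ℕ) (lam : ℕ → ℕ) (y : ℕ → ℕ → ℤ) (M : Finset (ℕ × ℕ)) : ℕ → ℕ → Finset ℕ :=
  fun j c => (Finset.Icc 1 n).filter (fun v =>
    (y (n - v) j < (lam 1 : ℤ) + 1 - (c : ℤ) ∧ (lam 1 : ℤ) + 1 - (c : ℤ) ≤ y (n + 1 - v) j) ∨
      ((n + 1 - v, j) ∈ M ∧ (lam 1 : ℤ) + 1 - (c : ℤ) = y (n - v) j))

/-- `N_{i,k} = lam i + (number of occurrences of i in the top k rows of T)`. -/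
def Ndom (W : ℕ) (lam : ℕ → ℕ) (T : ℕ → ℕ → Finset ℕ) (i k : ℕ) : ℕ :=
  lam i + ∑ r ∈ Finset.Icc 1 k, rowOcc W T r i

/-- `N↑_{i,k} = mu i + (number of occurrences of i in rows k, k+1, …, n from
the bottom of a contratableau)`. -/
def Nup (n W : ℕ) (mu : ℕ → ℕ) (T : ℕ → ℕ → Finset ℕ) (i k : ℕ) : ℕ :=
  mu i + ∑ r ∈ Finset.Icc k n, rowOcc W T r i

/-- The GT pattern `Y_T` with entries `y_{i,j} = N_{n-i+j, n-i}` (normalized to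
`0` outside the triangle). -/
def Ypat (n W : ℕ) (lam : ℕ → ℕ) (T : ℕ → ℕ → Finset ℕ) : ℕ → ℕ → ℤ :=
  fun i j => if 1 ≤ j ∧ j ≤ i ∧ i ≤ n then (Ndom W lam T (n - i + j) (n - i) : ℤ) else 0

/-- The transported mark set `M' = {(n+1-j, i-j) : (i,j) ∈ M}`. -/
def MarksOf (n : ℕ) (M : Finset (ℕ × ℕ)) : Finset (ℕ × ℕ) :=
  M.image (fun p => (n + 1 - p.2, p.1 - p.2))

/-- The stable Grothendieck polynomial `G_lam(x_1, …, x_n)`, a polynomial in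
variables `X 1, …, X n`. -/
noncomputable def Groth (n : ℕ) (lam : ℕ → ℕ) : MvPolynomial ℕ ℤ :=
  ∑ᶠ T ∈ {T : ℕ → ℕ → Finset ℕ | IsSSVT n (ShapeBox lam) T},
    (-1 : MvPolynomial ℕ ℤ) ^ (sizeT n (lam 1) T - sumParts n lam) *
      ∏ k ∈ Finset.Icc 1 n, MvPolynomial.X k ^ wtT n (lam 1) T k

/-! ### Prefixes of concatenations -/

lemma prefix_append_cases {p a b : List ℕ} (h : p <+: a ++ b) :
    p <+: a ∨ ∃ q, q <+: b ∧ p = a ++ q := by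
  obtain ⟨s, hs⟩ := h
  rcases List.append_eq_append_iff.1 hs with ⟨c, h1, _⟩ | ⟨c, h1, h2⟩
  · exact Or.inl ⟨c, h1.symm⟩
  · exact Or.inr ⟨c, ⟨s, h2.symm⟩, h1⟩

lemma prefix_flatten_cases (f : ℕ → List ℕ) (S p : List ℕ) (n : ℕ)
    (h : p <+: S ++ ((List.range n).map f).flatten) :
    p <+: S ∨ ∃ k < n, ∃ q, q <+: f k ∧ p = S ++ ((List.range k).map f).flatten ++ q := by
  induction n with
  | zero => left; simpa using h
  | succ n ih =>
    rw [List.range_succ, List.map_append, List.flatten_append, ← List.append_assoc] at h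
    rcases prefix_append_cases h with h | ⟨q, hq, hp⟩
    · rcases ih h with h | ⟨k, hk, q, hq, hp⟩
      · exact Or.inl h
      · exact Or.inr ⟨k, by omega, q, hq, hp⟩
    · exact Or.inr ⟨n, by omega, q, by simpa using hq, hp⟩

lemma dominant_iff_prefix (u : List ℕ) :
    Dominant u ↔ ∀ p, p <+: u → ∀ i, 1 ≤ i → p.count (i + 1) ≤ p.count i := by
  constructor
  · intro h p hp i hi
    have := h p.length i hi
    rwa [← List.prefix_iff_eq_take.1 hp] at this
  · intro h t i hi
    exact h _ (List.take_prefix t u) i hi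

/-! ### The superstandard word -/

lemma superWord_succ (k : ℕ) (lam : ℕ → ℕ) :
    superWord (k + 1) lam = superWord k lam ++ List.replicate (lam (k + 1)) (k + 1) := by
  simp [superWord, List.range_succ]

lemma count_superWord (k : ℕ) (lam : ℕ → ℕ) (v : ℕ) :
    (superWord k lam).count v = if 1 ≤ v ∧ v ≤ k then lam v else 0 := by
  induction k with
  | zero => simp [superWord]; omega
  | succ k ih =>
    rw [superWord_succ, List.count_append, ih, List.count_replicate]
    by_cases hv : k + 1 = v
    · subst hv; simp
    · simp only [beq_iff_eq, hv, if_false, add_zero]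
      congr 1
      apply propext
      omega

lemma superWord_dominant (n : ℕ) (lam : ℕ → ℕ) (hlam : IsPartition n lam) :
    Dominant (superWord n lam) := by
  rw [dominant_iff_prefix]
  intro p hp i hi
  rcases prefix_flatten_cases (fun i => List.replicate (lam (i + 1)) (i + 1)) [] p n hp with
    h | ⟨k, _, q, hq, rfl⟩
  · simp [List.prefix_nil.1 h]
  · change (superWord k lam ++ q).count (i + 1) ≤ (superWord k lam ++ q).count i
    have h1 := hq.sublist.count_le (i + 1)
    rw [List.count_replicate] at h1
    simp only [beq_iff_eq, add_left_inj] at h1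
    rw [List.count_append, List.count_append, count_superWord, count_superWord]
    have h2 := hlam.2.1 i hi
    by_cases hk : k = i
    · subst hk
      simp only [if_true] at h1
      simp [hi]
      omega
    · rw [if_neg hk] at h1
      split_ifs <;> omega

/-! ### Rows of the tableau -/

/-- The word of row `k + 1` of `T`, read from right to left over columns `1, …, W`. -/
def rowWord (W : ℕ) (T : ℕ → ℕ → Finset ℕ) (k : ℕ) : List ℕ :=
  (((List.range W).reverse).map (fun j => cellWord (T (k + 1) (j + 1)))).flatten

lemma mem_cellWord (S : Finset ℕ) (v : ℕ) : v ∈ cellWord S ↔ v ∈ S := by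
  simp [cellWord]

lemma count_cellWord (S : Finset ℕ) (v : ℕ) :
    (cellWord S).count v = if v ∈ S then 1 else 0 := by
  rw [cellWord, List.count_reverse, List.Nodup.count (Finset.sort_nodup S (· ≤ ·))]
  simp

lemma count_rowWord (W : ℕ) (T : ℕ → ℕ → Finset ℕ) (k v : ℕ) :
    (rowWord W T k).count v = rowOcc W T (k + 1) v := by
  induction W with
  | zero => simp [rowWord, rowOcc]
  | succ W ih =>
    have h : rowWord (W + 1) T k = cellWord (T (k + 1) (W + 1)) ++ rowWord W T k := by
      simp [rowWord, List.range_succ]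
    rw [h, List.count_append, ih, count_cellWord, rowOcc, rowOcc,
      Finset.sum_Icc_succ_top (by omega), add_comm]

lemma count_rows (W : ℕ) (T : ℕ → ℕ → Finset ℕ) (k v : ℕ) :
    (rowWordRect k W T).count v = ∑ r ∈ Finset.Icc 1 k, rowOcc W T r v := by
  induction k with
  | zero => simp [rowWordRect]
  | succ k ih =>
    have h : rowWordRect (k + 1) W T = rowWordRect k W T ++ rowWord W T k := by
      simp [rowWordRect, rowWord, List.range_succ]
    rw [h, List.count_append, ih, count_rowWord, Finset.sum_Icc_succ_top (by omega)]

/-- After the superstandard word and the first `k` rows, the letter `v` has been read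
`N_{v,k}` times; for `v > n` this uses `lam v = 0`. -/
lemma count_super_rows (n W : ℕ) (lam : ℕ → ℕ) (hlam : IsPartition n lam)
    (T : ℕ → ℕ → Finset ℕ) (k v : ℕ) :
    (superWord n lam ++ rowWordRect k W T).count v = Ndom W lam T v k := by
  rw [List.count_append, count_superWord, count_rows, Ndom]
  congr 1
  split_ifs with h
  · rfl
  · rcases Nat.eq_zero_or_pos v with rfl | hv
    · exact hlam.1.symm
    · exact (hlam.2.2 v (by omega)).symm

lemma count_super_rows_append (n W : ℕ) (lam : ℕ → ℕ) (hlam : IsPartition n lam)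
    (T : ℕ → ℕ → Finset ℕ) (k v : ℕ) (q : List ℕ) :
    (superWord n lam ++ rowWordRect k W T ++ q).count v = Ndom W lam T v k + q.count v := by
  rw [List.count_append, count_super_rows n W lam hlam]

lemma box_of_mem {n : ℕ} {mu : ℕ → ℕ} {T : ℕ → ℕ → Finset ℕ}
    (hT : IsSSVT n (ShapeBox mu) T) {r c v : ℕ} (hv : v ∈ T r c) : ShapeBox mu r c := by
  by_contra h
  simp [hT.2.2.1 r c h] at hv

/-- Row monotonicity between distant columns; intermediate boxes are nonempty, so the
condition on neighbouring boxes propagates. -/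
lemma row_mono {n : ℕ} {mu : ℕ → ℕ} {T : ℕ → ℕ → Finset ℕ}
    (hT : IsSSVT n (ShapeBox mu) T) {r c d a b : ℕ} (hcd : c < d)
    (ha : a ∈ T r c) (hb : b ∈ T r d) : a ≤ b := by
  have hbox := box_of_mem hT ha
  induction d, hcd using Nat.le_induction generalizing b with
  | base => exact hT.2.2.2.1 r c hbox (box_of_mem hT hb) a ha b hb
  | succ d hd ih =>
    have hb' := box_of_mem hT hb
    have hd' : ShapeBox mu r d := ⟨hb'.1, by have := hbox.2.1; omega, by have := hb'.2.2; omega⟩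
    obtain ⟨x, hx⟩ := hT.1 r d hd'
    exact (ih hx).trans (hT.2.2.2.1 r d hd' hb' x hx b hb)

/-- Entries of row `r` are at least `r`, by strictness of columns. -/
lemma row_le_entry {n : ℕ} {mu : ℕ → ℕ} (hmu : IsPartition n mu) {T : ℕ → ℕ → Finset ℕ}
    (hT : IsSSVT n (ShapeBox mu) T) {r c v : ℕ} (hv : v ∈ T r c) : r ≤ v := by
  have hbox := box_of_mem hT hv
  obtain ⟨h1, hc, hr⟩ := hbox
  induction r, h1 using Nat.le_induction generalizing v with
  | base => exact (Finset.mem_Icc.1 (hT.2.1 _ _ ⟨le_rfl, hc, hr⟩ hv)).1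
  | succ r h1 ih =>
    have hb : ShapeBox mu r c := ⟨h1, hc, hr.trans (hmu.2.1 r h1)⟩
    obtain ⟨x, hx⟩ := hT.1 r c hb
    have := ih hx hb.2.2
    have := hT.2.2.2.2 r c hb ⟨by omega, hc, hr⟩ x hx v hv
    omega

lemma rowOcc_eq_zero {n W : ℕ} {mu : ℕ → ℕ} (hmu : IsPartition n mu) {T : ℕ → ℕ → Finset ℕ}
    (hT : IsSSVT n (ShapeBox mu) T) {r v : ℕ} (hv : v < r ∨ n < v) : rowOcc W T r v = 0 := by
  apply Finset.sum_eq_zero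
  intro c _
  rw [if_neg]
  intro h
  have h1 := row_le_entry hmu hT h
  have h2 := (Finset.mem_Icc.1 (hT.2.1 _ _ (box_of_mem hT h) h)).2
  omega

lemma rowWord_sorted {n W : ℕ} {mu : ℕ → ℕ} {T : ℕ → ℕ → Finset ℕ}
    (hT : IsSSVT n (ShapeBox mu) T) (k : ℕ) : (rowWord W T k).Pairwise (· ≥ ·) := by
  rw [rowWord, List.pairwise_flatten]
  constructor
  · intro l hl
    obtain ⟨j, _, rfl⟩ := List.mem_map.1 hl
    rw [cellWord, List.pairwise_reverse]
    exact Finset.pairwise_sort _ _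
  · rw [List.pairwise_map, List.pairwise_reverse]
    refine List.pairwise_lt_range.imp ?_
    intro c d hcd x hx y hy
    exact row_mono hT (by omega) ((mem_cellWord _ _).1 hy) ((mem_cellWord _ _).1 hx)

/-- A weakly decreasing word has a prefix with all of its letters `i + 1` and none of its
letters `i`, namely the prefix of its letters `> i`. -/
lemma exists_prefix_of_sorted (L : List ℕ) (hL : L.Pairwise (· ≥ ·)) (i : ℕ) :
    ∃ q, q <+: L ∧ q.count (i + 1) = L.count (i + 1) ∧ q.count i = 0 := by
  induction L with
  | nil => exact ⟨[], by simp⟩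
  | cons a L ih =>
    rw [List.pairwise_cons] at hL
    by_cases ha : i < a
    · obtain ⟨q, h1, h2, h3⟩ := ih hL.2
      refine ⟨a :: q, List.cons_prefix_cons.2 ⟨rfl, h1⟩, ?_, ?_⟩
      · simp [List.count_cons, h2]
      · rw [List.count_cons_of_ne (by omega), h3]
    · refine ⟨[], List.nil_prefix, ?_, rfl⟩
      symm
      rw [List.count_nil, List.count_eq_zero]
      intro h
      rcases List.mem_cons.1 h with h | h
      · omega
      · have := hL.1 _ h
        omega

/-! ### The numbers `N_{i,k}` and the criterion -/

lemma Ndom_succ (W : ℕ) (lam : ℕ → ℕ) (T : ℕ → ℕ → Finset ℕ) (i k : ℕ) :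
    Ndom W lam T i (k + 1) = Ndom W lam T i k + rowOcc W T (k + 1) i := by
  rw [Ndom, Ndom, Finset.sum_Icc_succ_top (by omega), add_assoc]

/-- The inequalities with `k ≤ i < n` imply all others: rows below the `(i+1)`-st contain no
`i + 1`, and letters `> n` do not occur at all. -/
lemma Ndom_le_all {n W : ℕ} {lam mu : ℕ → ℕ} (hlam : IsPartition n lam)
    (hmu : IsPartition n mu) {T : ℕ → ℕ → Finset ℕ} (hT : IsSSVT n (ShapeBox mu) T)
    (h : ∀ i k, 1 ≤ i → i < n → k ≤ i → Ndom W lam T (i + 1) (k + 1) ≤ Ndom W lam T i k)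
    (i k : ℕ) (hi : 1 ≤ i) : Ndom W lam T (i + 1) (k + 1) ≤ Ndom W lam T i k := by
  by_cases hin : i < n
  · induction k with
    | zero => exact h i 0 hi hin (by omega)
    | succ k ih =>
      by_cases hk : k + 1 ≤ i
      · exact h i _ hi hin hk
      · rw [Ndom_succ, rowOcc_eq_zero hmu hT (Or.inl (by omega)), Ndom_succ W lam T i k]
        omega
  · have h0 : Ndom W lam T (i + 1) (k + 1) = 0 := by
      rw [Ndom, hlam.2.2 (i + 1) (by omega),
        Finset.sum_eq_zero (fun r _ => rowOcc_eq_zero hmu hT (Or.inr (by omega))), add_zero]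
    omega

/-- Let `lam, mu ∈ P[n]` and let `T` be a semi-standard
set-valued tableau of shape `mu` with entries `≤ n`, with rows `T_1, …, T_n`
from the top.  With `N_{i,k} = lam i + (number of occurrences of i in
T_1, …, T_k)`, the tableau `T` is `lam`-dominant iff `N_{i,k} ≥ N_{i+1,k+1}`
for all `1 ≤ i < n` and `0 ≤ k ≤ i`. -/
theorem lamDominant_iff_Ndom (n : ℕ) (hn : 0 < n) (lam mu : ℕ → ℕ)
    (hlam : IsPartition n lam) (hmu : IsPartition n mu)
    (T : ℕ → ℕ → Finset ℕ) (hT : IsSSVT n (ShapeBox mu) T) :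
    LamDominant n lam (rowWordRect n (mu 1) T) ↔
      ∀ i k, 1 ≤ i → i < n → k ≤ i →
        Ndom (mu 1) lam T (i + 1) (k + 1) ≤ Ndom (mu 1) lam T i k := by
  constructor
  · intro hdom i k hi hin hk
    rw [LamDominant, dominant_iff_prefix] at hdom
    obtain ⟨q, hq, hq1, hq0⟩ :=
      exists_prefix_of_sorted (rowWord (mu 1) T k) (rowWord_sorted hT k) i
    have hpre : superWord n lam ++ rowWordRect k (mu 1) T ++ q <+:
        superWord n lam ++ rowWordRect n (mu 1) T := by
      rw [List.append_assoc, List.prefix_append_right_inj]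
      have h1 : rowWordRect k (mu 1) T ++ q <+: rowWordRect (k + 1) (mu 1) T := by
        have h : rowWordRect (k + 1) (mu 1) T
            = rowWordRect k (mu 1) T ++ rowWord (mu 1) T k := by
          simp [rowWordRect, rowWord, List.range_succ]
        rw [h, List.prefix_append_right_inj]
        exact hq
      refine h1.trans ?_
      obtain ⟨m, rfl⟩ := Nat.exists_eq_add_of_le (show k + 1 ≤ n by omega)
      rw [rowWordRect, rowWordRect, List.range_add (n := k + 1), List.map_append, List.flatten_append]
      exact List.prefix_append _ _
    have := hdom _ hpre i hi
    rw [count_super_rows_append n _ lam hlam, count_super_rows_append n _ lam hlam, hq1, hq0, count_rowWord, ← Ndom_succ] at this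
    simpa using this
  · intro h
    rw [LamDominant, dominant_iff_prefix]
    intro p hp i hi
    rcases prefix_flatten_cases (rowWord (mu 1) T) _ p n hp with h0 | ⟨k, _, q, hq, rfl⟩
    · exact (dominant_iff_prefix _).1 (superWord_dominant n lam hlam) p h0 i hi
    · change (superWord n lam ++ rowWordRect k (mu 1) T ++ q).count (i + 1) ≤
        (superWord n lam ++ rowWordRect k (mu 1) T ++ q).count i
      rw [count_super_rows_append n _ lam hlam, count_super_rows_append n _ lam hlam]
      have h1 := hq.sublist.count_le (i + 1)
      have h2 := Ndom_le_all hlam hmu hT h i k hi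
      rw [count_rowWord] at h1
      rw [Ndom_succ] at h2
      omega
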